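/- For every pair of nontrivial words w₁ ∈ F_{d₁} and w₂ ∈ F_{d₂}, there exists a natural number N such that for every integer n ≥ N, every element of SU(n) is a product g₁g₂ with g₁ ∈ w₁(SU(n)) and g₂ ∈ w₂(SU(n)); that is, SU(n) = w₁(SU(n))·w₂(SU(n)). -/

import Mathlib

/-- The set of `w`-values in the subgroup of `G` given by the set `S`:
elements obtained by evaluating the word `w` at a `d`-tuple of elements of `S`. -/
def wordValuesIn {d : ℕ} {G : Type*} [Group G] (w : FreeGroup (Fin d)) (S : Set G) : Set G :=
  {x | ∃ g : Fin d → G, (∀ i, g i ∈ S) ∧ FreeGroup.lift g w = x}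

/-- `SU(n)`, the special unitary group, as the subset of the unitary group consisting of
matrices of determinant 1. -/
def SU (n : ℕ) : Set (Matrix.unitaryGroup (Fin n) ℂ) :=
  {M | (M : Matrix (Fin n) (Fin n) ℂ).det = 1}

open Matrix

theorem infinite_circle : (Metric.sphere (0:ℂ) 1).Infinite := by
  have h1 : IsPreconnected (Metric.sphere (0:ℂ) 1) :=
    isPreconnected_sphere (by simp [Complex.rank_real_complex]) 0 1
  refine h1.infinite_of_nontrivial ⟨1, by simp, -1, by simp, ?_⟩
  norm_num [Complex.ext_iff]

theorem exists_circle_not_root (p : Polynomial ℂ) (hp : p ≠ 0) :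
    ∃ μ : ℂ, ‖μ‖ = 1 ∧ p.eval μ ≠ 0 := by
  by_contra! h
  apply hp
  refine Polynomial.eq_zero_of_infinite_isRoot p (infinite_circle.mono ?_)
  intro x hx
  exact h x (by simpa using hx)

theorem unitary_diag {ι : Type*} [Fintype ι] [DecidableEq ι] (U : Matrix ι ι ℂ)
    (hU : U ∈ unitaryGroup ι ℂ) :
    ∃ V ∈ unitaryGroup ι ℂ, ∃ d : ι → ℂ, U = V * diagonal d * star V := by
  obtain ⟨μ, hμ, hroot⟩ := exists_circle_not_root U.charpoly (U.charpoly_monic.ne_zero)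
  rw [Matrix.eval_charpoly] at hroot
  have hμ2 : star μ * μ = 1 := by
    have := Complex.conj_mul' μ
    rw [hμ] at this; simpa using this
  set A : Matrix ι ι ℂ := scalar ι μ - U with hA
  have hAu : IsUnit A.det := by simpa [isUnit_iff_ne_zero] using hroot
  have hAu' : IsUnit (star A).det := by
    rw [star_eq_conjTranspose, det_conjTranspose]; exact hAu.star
  set B : Matrix ι ι ℂ := scalar ι μ + U with hB
  have hs : scalar ι μ = μ • (1 : Matrix ι ι ℂ) := by simp [smul_one_eq_diagonal]
  have hUU : star U * U = 1 := mem_unitaryGroup_iff'.1 hU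
  have key : star A * B = - (star B * A) := by
    simp only [hA, hB, hs, star_sub, star_add, star_smul, star_one, sub_mul, mul_sub, add_mul,
      mul_add, smul_mul_assoc, mul_smul_comm, one_mul, mul_one, hUU]
    match_scalars
    · linear_combination 2 * hμ2
    · ring
    · ring
  set H : Matrix ι ι ℂ := Complex.I • (B * A⁻¹) with hH
  have hHA : H * A = Complex.I • B := by
    rw [hH, smul_mul_assoc, nonsing_inv_mul_cancel_right _ _ hAu]
  have hherm : H.IsHermitian := by
    have h1 : star A * star H * A = star A * H * A := by
      rw [← star_mul, mul_assoc, hHA, star_smul, smul_mul_assoc, mul_smul_comm, key]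
      simp
    have h2 : star H * A = H * A := by
      rw [mul_assoc, mul_assoc] at h1
      have := congrArg (fun X => (star A)⁻¹ * X) h1
      simpa [nonsing_inv_mul_cancel_left _ _ hAu'] using this
    have := congrArg (fun X => X * A⁻¹) h2
    simp only [mul_nonsing_inv_cancel_right _ _ hAu] at this
    exact this
  obtain ⟨V, e, hV⟩ : ∃ (V : unitaryGroup ι ℂ) (e : ι → ℝ),
      H = V * diagonal (fun i => (e i : ℂ)) * star (V : Matrix ι ι ℂ) := by
    refine ⟨hherm.eigenvectorUnitary, hherm.eigenvalues, ?_⟩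
    conv_lhs => rw [hherm.spectral_theorem, Unitary.conjStarAlgAut_apply]
    rfl
  have hVV : star (V : Matrix ι ι ℂ) * V = 1 := mem_unitaryGroup_iff'.1 V.2
  have hVV' : (V : Matrix ι ι ℂ) * star (V : Matrix ι ι ℂ) = 1 := mem_unitaryGroup_iff.1 V.2
  have heq : H * U + Complex.I • U = μ • H - (Complex.I * μ) • 1 := by
    have := hHA
    rw [hA, hB, hs] at this
    simp only [mul_sub, mul_smul_comm, mul_one, smul_add, smul_smul] at this
    rw [sub_eq_iff_eq_add] at this
    rw [this]; module
  set Y : Matrix ι ι ℂ := star (V : Matrix ι ι ℂ) * U * V with hY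
  have heq2 : diagonal (fun i => (e i : ℂ)) * Y + Complex.I • Y
      = μ • diagonal (fun i => (e i : ℂ)) - (Complex.I * μ) • 1 := by
    have := congrArg (fun X => star (V : Matrix ι ι ℂ) * X * V) heq
    simp only [hV, mul_add, add_mul, mul_sub, sub_mul, smul_mul_assoc, mul_smul_comm, mul_one, hVV] at this
    simp only [mul_assoc, hVV, mul_one] at this
    simp only [← mul_assoc, hVV, one_mul] at this
    rw [hY]; simp only [← mul_assoc]; exact this
  refine ⟨V, V.2, fun i => Y i i, ?_⟩
  have hYd : Y = diagonal (fun i => Y i i) := by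
    ext i j
    by_cases hij : i = j
    · subst hij; simp
    · have := congrFun (congrFun heq2 i) j
      simp [diagonal_mul, hij] at this
      rw [← add_mul] at this
      rw [diagonal_apply_ne _ hij]
      refine (mul_eq_zero.1 this).resolve_left ?_
      intro h0
      have := congrArg Complex.im h0
      simp at this
  rw [← hYd, hY]
  simp only [mul_assoc, hVV', mul_one]
  simp only [← mul_assoc, hVV', one_mul]

noncomputable section SymRep
variable {m : ℕ}

def tens (m : ℕ) (g : Matrix (Fin 2) (Fin 2) ℂ) :
    Matrix (Fin m → Fin 2) (Fin m → Fin 2) ℂ := of fun f h => ∏ i, g (f i) (h i)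

def wt (f : Fin m → Fin 2) : ℕ := (Finset.univ.filter (fun i => f i = 1)).card

theorem wt_le (f : Fin m → Fin 2) : wt f ≤ m := by
  unfold wt
  simpa using Finset.card_filter_le (Finset.univ : Finset (Fin m)) (fun i => f i = 1)

def fib (m : ℕ) (k : Fin (m+1)) : ℕ := 
  (Finset.univ.filter (fun f : Fin m → Fin 2 => wt f = k)).card

theorem fib_pos (k : Fin (m+1)) : 0 < fib m k := by
  refine Finset.card_pos.2 ⟨fun i => if (i : ℕ) < k then 1 else 0, ?_⟩
  simp only [Finset.mem_filter, Finset.mem_univ, true_and]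
  unfold wt
  have : ∀ i : Fin m, (if (i:ℕ) < k then (1:Fin 2) else 0) = 1 ↔ (i:ℕ) < k := by
    intro i; split_ifs with h <;> simp [h]
  simp only [this]
  rw [Fin.card_filter_val_lt]
  omega

def iso (m : ℕ) : Matrix (Fin m → Fin 2) (Fin (m+1)) ℂ :=
  of fun f k => if wt f = k then ((Real.sqrt (fib m k))⁻¹ : ℂ) else 0

theorem sqrt_fib (k : Fin (m+1)) :
    ((Real.sqrt (fib m k))⁻¹ : ℂ) * ((Real.sqrt (fib m k))⁻¹ : ℂ) = (fib m k : ℂ)⁻¹ := by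
  rw [← mul_inv, ← Complex.ofReal_mul, Real.mul_self_sqrt (by positivity)]
  simp

theorem iso_isom (m : ℕ) : (iso m)ᴴ * iso m = 1 := by
  ext k l
  rw [mul_apply]
  have : ∀ f : Fin m → Fin 2, (iso m)ᴴ k f * iso m f l
      = if wt f = k then (if k = l then (fib m k : ℂ)⁻¹ else 0) else 0 := by
    intro f
    simp only [conjTranspose_apply, iso, of_apply]
    by_cases h1 : wt f = k
    · by_cases h2 : k = l
      · subst h2
        simp only [h1, if_true]
        rw [← sqrt_fib]; simp
      · have : ¬ ((k:ℕ) = l) := fun h => h2 (Fin.ext h)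
        simp [h1, h2, this]
    · simp [h1]
  simp only [this]
  rw [← Finset.sum_filter, Finset.sum_const]
  have h0 : ((fib m k : ℕ) : ℂ) ≠ 0 := by exact_mod_cast (fib_pos k).ne'
  by_cases h2 : k = l
  · subst h2
    simp only [if_true, one_apply_eq, nsmul_eq_mul]
    exact mul_inv_cancel₀ h0
  · simp [h2]

theorem tens_mul (g h : Matrix (Fin 2) (Fin 2) ℂ) : tens m (g * h) = tens m g * tens m h := by
  ext a b
  simp only [tens, of_apply, mul_apply]
  rw [Finset.prod_univ_sum, Fintype.piFinset_univ]
  simp [Finset.prod_mul_distrib]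

theorem tens_conj (g : Matrix (Fin 2) (Fin 2) ℂ) : tens m gᴴ = (tens m g)ᴴ := by
  ext a b
  simp [tens]

theorem exists_perm_of_wt (f f' : Fin m → Fin 2) (h : wt f = wt f') :
    ∃ σ : Equiv.Perm (Fin m), ∀ i, f' (σ i) = f i := by
  have hc : ∀ c : Fin 2, Fintype.card {a // f a = c} = Fintype.card {a // f' a = c} := by
    have h1 : Fintype.card {a // f a = 1} = Fintype.card {a // f' a = 1} := by
      simpa [Fintype.card_subtype, wt] using h
    have key : ∀ q : Fin m → Fin 2, Fintype.card {a // q a = 0} = m - Fintype.card {a // q a = 1} := by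
      intro q
      have := Fintype.card_subtype_compl (fun a => q a = 1)
      rw [Fintype.card_fin] at this
      rw [← this]
      apply Fintype.card_congr
      apply Equiv.subtypeEquivRight
      intro a; omega
    intro c
    match c with
    | 0 => rw [key, key, h1]
    | 1 => exact h1
  exact ⟨Equiv.ofFiberEquiv fun c => Fintype.equivOfCardEq (hc c),
    fun i => Equiv.ofFiberEquiv_map _ i⟩

theorem wt_comp (f : Fin m → Fin 2) (σ : Equiv.Perm (Fin m)) : wt (f ∘ σ) = wt f := by
  unfold wt
  apply Finset.card_bij (fun i _ => σ i)
  · simp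
  · simp
  · intro b hb
    exact ⟨σ.symm b, by simpa using hb, by simp⟩

theorem tens_iso_const (g : Matrix (Fin 2) (Fin 2) ℂ) (f f' : Fin m → Fin 2) (h : wt f = wt f')
    (k : Fin (m+1)) : (tens m g * iso m) f k = (tens m g * iso m) f' k := by
  obtain ⟨σ, hσ⟩ := exists_perm_of_wt f f' h
  simp only [mul_apply]
  symm
  apply Fintype.sum_equiv (Equiv.arrowCongr σ.symm (Equiv.refl (Fin 2)))
  intro q
  have h1 : (Equiv.arrowCongr σ.symm (Equiv.refl (Fin 2))) q = q ∘ σ := by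
    ext i; simp
  rw [h1]
  congr 1
  · simp only [tens, of_apply, Function.comp, ← hσ]
    exact (Equiv.prod_comp σ (fun i => g (f' i) (q i))).symm
  · simp only [iso, of_apply, wt_comp]

theorem proj_const (X : Matrix (Fin m → Fin 2) (Fin (m+1)) ℂ)
    (hX : ∀ f f', wt f = wt f' → ∀ k, X f k = X f' k) : iso m * ((iso m)ᴴ * X) = X := by
  ext f k
  have hf : wt f < m + 1 := Nat.lt_succ_of_le (wt_le f)
  rw [mul_apply, Finset.sum_eq_single ⟨wt f, hf⟩]
  · rw [mul_apply, Finset.mul_sum]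
    have : ∀ q : Fin m → Fin 2, iso m f ⟨wt f, hf⟩ * ((iso m)ᴴ ⟨wt f, hf⟩ q * X q k)
        = if wt q = wt f then (fib m ⟨wt f, hf⟩ : ℂ)⁻¹ * X f k else 0 := by
      intro q
      by_cases h : wt q = wt f
      · rw [hX q f h, if_pos h, ← sqrt_fib]
        simp [iso, h, mul_assoc]
      · simp [iso, h]
    simp only [this]
    rw [← Finset.sum_filter, Finset.sum_const, nsmul_eq_mul, ← mul_assoc]
    have h0 : ((fib m ⟨wt f, hf⟩ : ℕ) : ℂ) ≠ 0 := by exact_mod_cast (fib_pos _).ne'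
    have : ((fib m ⟨wt f, hf⟩ : ℕ) : ℂ) * (fib m ⟨wt f, hf⟩ : ℂ)⁻¹ = 1 := mul_inv_cancel₀ h0
    have h3 := congrArg (· * X f k) this
    simpa [fib] using h3
  · intro b _ hb
    have : wt f ≠ b := fun h => hb (Fin.ext h.symm)
    simp [iso, this]
  · simp

def sym (m : ℕ) (g : Matrix (Fin 2) (Fin 2) ℂ) : Matrix (Fin (m+1)) (Fin (m+1)) ℂ :=
  (iso m)ᴴ * (tens m g * iso m)

theorem iso_sym (g : Matrix (Fin 2) (Fin 2) ℂ) : iso m * sym m g = tens m g * iso m :=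
  proj_const _ fun f f' h k => tens_iso_const g f f' h k

theorem sym_mul (g h : Matrix (Fin 2) (Fin 2) ℂ) : sym m (g * h) = sym m g * sym m h := by
  conv_lhs => rw [sym, tens_mul, Matrix.mul_assoc, ← iso_sym, ← Matrix.mul_assoc (tens m g),
    ← iso_sym, ← Matrix.mul_assoc, ← Matrix.mul_assoc, iso_isom, Matrix.one_mul]

theorem sym_conj (g : Matrix (Fin 2) (Fin 2) ℂ) : sym m gᴴ = (sym m g)ᴴ := by
  simp [sym, tens_conj, Matrix.mul_assoc]

theorem sym_diagonal (a b : ℂ) :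
    sym m (diagonal ![a, b]) = diagonal fun k : Fin (m+1) => a ^ (m - (k:ℕ)) * b ^ (k:ℕ) := by
  have h1 : tens m (diagonal ![a,b]) * iso m
      = iso m * diagonal fun k : Fin (m+1) => a ^ (m - (k:ℕ)) * b ^ (k:ℕ) := by
    have h2 : tens m (diagonal ![a,b]) = diagonal fun f => a ^ (m - wt f) * b ^ (wt f) := by
      ext f h
      by_cases hfh : f = h
      · subst hfh
        simp only [tens, of_apply, diagonal_apply_eq]
        have : ∀ i, ![a,b] (f i) = if f i = 1 then b else a := by
          intro i
          generalize f i = c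
          fin_cases c <;> simp
        simp only [this, Finset.prod_ite, Finset.prod_const, wt]
        rw [mul_comm, Finset.filter_not, Finset.card_sdiff_of_subset (Finset.filter_subset _ _)]
        simp
      · rw [diagonal_apply_ne _ hfh]
        obtain ⟨i, hi⟩ := Function.ne_iff.1 hfh
        exact Finset.prod_eq_zero (Finset.mem_univ i) (diagonal_apply_ne _ hi)
    ext f k
    rw [h2, diagonal_mul, mul_diagonal]
    by_cases h : wt f = k
    · rw [h]; ring
    · simp [iso, h]
  rw [sym, h1, ← Matrix.mul_assoc, iso_isom, Matrix.one_mul]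

theorem sym_one : sym m 1 = 1 := by
  have : (1 : Matrix (Fin 2) (Fin 2) ℂ) = diagonal ![1, 1] := by
    ext i j; fin_cases i <;> fin_cases j <;> simp
  rw [this, sym_diagonal]; simp

def symHom (m : ℕ) : unitaryGroup (Fin 2) ℂ →* unitaryGroup (Fin (m+1)) ℂ where
  toFun g := ⟨sym m g, by
    rw [mem_unitaryGroup_iff', star_eq_conjTranspose, ← sym_conj, ← sym_mul,
      ← star_eq_conjTranspose, mem_unitaryGroup_iff'.1 g.2, sym_one]⟩
  map_one' := Subtype.ext sym_one
  map_mul' g h := Subtype.ext (sym_mul _ _)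

end SymRep

noncomputable section Words

/-- eigenvector attached to a letter -/
def uv (x : ℕ × Bool) : Fin 2 → ℂ := if x.2 then ![1, (x.1:ℂ)] else ![-(x.1:ℂ), 1]

def cc (x : ℕ × Bool) : ℂ := ((1 + (x.1:ℝ)^2 : ℝ) : ℂ)⁻¹

def RR (x : ℕ × Bool) : Matrix (Fin 2) (Fin 2) ℂ := cc x • vecMulVec (uv x) (uv x)

theorem cc_ne (x : ℕ × Bool) : ((1 + (x.1:ℝ)^2 : ℝ) : ℂ) ≠ 0 := by
  exact_mod_cast (by positivity : (0:ℝ) < 1 + (x.1:ℝ)^2).ne'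

theorem cc_ne' (i : ℕ) : (1 + (i:ℂ)^2) ≠ 0 := by
  have := cc_ne (i, true); push_cast at this; exact this

theorem RR_not (i : ℕ) (b : Bool) : RR (i, !b) = 1 - RR (i, b) := by
  have := cc_ne' i
  cases b <;> ext j k <;> fin_cases j <;> fin_cases k <;>
    simp [RR, uv, cc, vecMulVec_apply] <;> field_simp <;> ring

theorem RR_idem (x : ℕ × Bool) : RR x * RR x = RR x := by
  obtain ⟨i, b⟩ := x
  have := cc_ne' i
  cases b <;> ext j k <;> fin_cases j <;> fin_cases k <;>
    simp [RR, uv, cc, vecMulVec_apply, mul_apply, Fin.sum_univ_two] <;> field_simp <;> ring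

theorem RR_star (x : ℕ × Bool) : star (RR x) = RR x := by
  obtain ⟨i, b⟩ := x
  cases b <;> ext j k <;> fin_cases j <;> fin_cases k <;>
    simp [RR, uv, cc, vecMulVec_apply]

theorem uv_dot (x y : ℕ × Bool) (h : x.1 = y.1 → x.2 = y.2) : uv x ⬝ᵥ uv y ≠ 0 := by
  obtain ⟨i, b⟩ := x
  obtain ⟨j, c⟩ := y
  have h1 : (1 + (i:ℂ) * j) ≠ 0 := by
    exact_mod_cast (by positivity : 0 < 1 + i * j).ne'
  cases b <;> cases c <;> simp [uv, dotProduct, Fin.sum_univ_two] at h ⊢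
  · rwa [add_comm]
  · intro h2; apply h; exact_mod_cast (neg_add_eq_zero.1 h2)
  · intro h2; apply h; exact_mod_cast (neg_add_eq_zero.1 h2).symm
  · exact h1

theorem RR_mulVec (x y : ℕ × Bool) : RR x *ᵥ uv y = (cc x * (uv x ⬝ᵥ uv y)) • uv x := by
  rw [RR, smul_mulVec, vecMulVec_mulVec]
  ext i; simp; ring

theorem uv_ne (x : ℕ × Bool) : uv x ≠ 0 := by
  obtain ⟨i, b⟩ := x
  cases b
  · intro h; have := congrFun h 1; simp [uv] at this
  · intro h; have := congrFun h 0; simp [uv] at this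

theorem prod_RR (x : ℕ × Bool) (L : List (ℕ × Bool)) (h : FreeGroup.IsReduced (x :: L)) :
    ∃ ξ : Fin 2 → ℂ, ∃ s : ℂ, s ≠ 0 ∧ ((x :: L).map RR).prod *ᵥ ξ = s • uv x := by
  have hcc : ∀ x, cc x ≠ 0 := fun x => inv_ne_zero (cc_ne x)
  induction L generalizing x with
  | nil =>
    refine ⟨uv x, cc x * (uv x ⬝ᵥ uv x), ?_, ?_⟩
    rotate_left
    · simp only [List.map_cons, List.map_nil, List.prod_cons, List.prod_nil, mul_one]
      exact RR_mulVec x x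
    · exact mul_ne_zero (hcc x) (uv_dot x x (fun _ => rfl))
  | cons y L ih =>
    unfold FreeGroup.IsReduced at h
    rw [List.isChain_cons_cons] at h
    obtain ⟨ξ, s, hs, hξ⟩ := ih y h.2
    refine ⟨ξ, s * (cc x * (uv x ⬝ᵥ uv y)), mul_ne_zero hs (mul_ne_zero (hcc x) (uv_dot x y h.1)), ?_⟩
    rw [List.map_cons, List.prod_cons, ← mulVec_mulVec, hξ, mulVec_smul, RR_mulVec, smul_smul]

theorem prod_RR_ne (L : List (ℕ × Bool)) (h : FreeGroup.IsReduced L) (hL : L ≠ []) :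
    (L.map RR).prod ≠ 0 := by
  obtain ⟨x, L, rfl⟩ := List.exists_cons_of_ne_nil hL
  obtain ⟨ξ, s, hs, hξ⟩ := prod_RR x L h
  intro h0
  rw [h0, zero_mulVec] at hξ
  exact smul_ne_zero hs (uv_ne x) hξ.symm

/-- the letter evaluated at parameter z -/
def LL (z : ℂ) (x : ℕ × Bool) : Matrix (Fin 2) (Fin 2) ℂ := z⁻¹ • RR x + z • (1 - RR x)

theorem exists_word_ne (L : List (ℕ × Bool)) (h : FreeGroup.IsReduced L) (hL : L ≠ []) :
    ∃ z : ℂ, ‖z‖ = 1 ∧ (L.map (LL z)).prod ≠ 1 := by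
  by_contra! hcon
  apply prod_RR_ne L h hL
  set Q : Matrix (Fin 2) (Fin 2) (Polynomial ℂ) :=
    (L.map fun x => (RR x).map Polynomial.C + 
      (Polynomial.X ^ 2 : Polynomial ℂ) • (1 - RR x).map Polynomial.C).prod with hQ
  have hev : ∀ z : ℂ, Q.map (Polynomial.eval z) = (L.map fun x => RR x + z ^ 2 • (1 - RR x)).prod := by
    intro z
    have : Q.map (Polynomial.eval z) = (Polynomial.evalRingHom z).mapMatrix Q := rfl
    rw [this, hQ, map_list_prod, List.map_map]
    congr 2
    funext x
    ext i j
    simp [mul_comm]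
  have hz : ∀ z : ℂ, ‖z‖ = 1 → Q.map (Polynomial.eval z) = z ^ L.length • 1 := by
    intro z hz1
    have hz0 : z ≠ 0 := by rintro rfl; simp at hz1
    suffices hs : (L.map fun x => RR x + z ^ 2 • (1 - RR x)).prod = z ^ L.length • (L.map (LL z)).prod by
      rw [hev, hs, hcon z hz1]
    clear_value Q
    clear hcon hQ hev h hL
    induction L with
    | nil => simp
    | cons x L ih =>
      rw [List.map_cons, List.prod_cons, ih, List.map_cons, List.prod_cons, List.length_cons, pow_succ _ L.length,
        mul_smul (z ^ L.length) z, mul_smul_comm, ← smul_mul_assoc z]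
      congr 2
      rw [LL, smul_add]
      match_scalars <;> field_simp
  have hpoly : ∀ i j, Q i j = Polynomial.X ^ L.length * Polynomial.C ((1 : Matrix (Fin 2) (Fin 2) ℂ) i j) := by
    intro i j
    apply Polynomial.eq_of_infinite_eval_eq
    refine infinite_circle.mono ?_
    intro z hz'
    have := congrFun (congrFun (hz z (by simpa using hz')) i) j
    simp only [Matrix.map_apply, Matrix.smul_apply, smul_eq_mul] at this
    simp only [Set.mem_ofPred_eq, Polynomial.eval_mul, Polynomial.eval_pow, Polynomial.eval_X,
      Polynomial.eval_C]
    exact this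
  have h0 := hev 0
  have : (L.map fun x => RR x + (0:ℂ) ^ 2 • (1 - RR x)) = L.map RR := by simp
  rw [this] at h0
  rw [← h0]
  ext i j
  have hlen : L.length ≠ 0 := by simpa using hL
  simp [hpoly, hlen]

theorem LL_inv (z : ℂ) (i : ℕ) (b : Bool) : LL z⁻¹ (i, b) = LL z (i, !b) := by
  rw [LL, LL, RR_not]; simp [add_comm]

theorem LL_mul (z : ℂ) (hz : z ≠ 0) (x : ℕ × Bool) : LL z x * LL z⁻¹ x = 1 := by
  have h := RR_idem x
  simp only [LL, add_mul, mul_add, mul_sub, sub_mul, smul_mul_assoc, mul_smul_comm, mul_one, one_mul, h, smul_smul,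
    sub_self, smul_zero, inv_inv]
  match_scalars <;> field_simp <;> ring

theorem LL_star (z : ℂ) (hz : ‖z‖ = 1) (x : ℕ × Bool) : star (LL z x) = LL z⁻¹ x := by
  have h1 : star z = z⁻¹ := by
    rw [Complex.inv_eq_conj hz]; rfl
  simp [LL, RR_star, h1]

theorem LL_mem (z : ℂ) (hz : ‖z‖ = 1) (x : ℕ × Bool) : LL z x ∈ unitaryGroup (Fin 2) ℂ := by
  rw [mem_unitaryGroup_iff, LL_star z hz, LL_mul]
  rintro rfl; simp at hz

theorem LL_det (z : ℂ) (hz : z ≠ 0) (x : ℕ × Bool) : (LL z x).det = 1 := by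
  obtain ⟨i, b⟩ := x
  have := cc_ne' i
  rw [det_fin_two]
  cases b <;> simp [LL, RR, uv, cc, vecMulVec_apply] <;> field_simp <;> ring

/-- trace of a special unitary 2x2 matrix -/
theorem su2_trace (g : Matrix (Fin 2) (Fin 2) ℂ) (hg : g ∈ unitaryGroup (Fin 2) ℂ) (hd : g.det = 1) :
    g.trace.im = 0 ∧ (2 ≤ g.trace.re → g = 1) := by
  have h1 : star g = g.adjugate := by
    have h2 := mem_unitaryGroup_iff'.1 hg
    have h3 : g * g.adjugate = 1 := by rw [mul_adjugate, hd, one_smul]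
    calc star g = star g * (g * g.adjugate) := by rw [h3, mul_one]
      _ = g.adjugate := by rw [← mul_assoc, h2, one_mul]
  rw [adjugate_fin_two] at h1
  have e00 := congrFun (congrFun h1 0) 0
  have e01 := congrFun (congrFun h1 1) 0
  simp [star_apply] at e00 e01
  have hdet := hd
  rw [det_fin_two] at hdet
  have h11 : g 1 1 = star (g 0 0) := e00.symm
  have h10 : g 1 0 = - star (g 0 1) := by rw [← neg_eq_iff_eq_neg]; exact e01.symm
  rw [h11, h10] at hdet
  rw [trace_fin_two, h11]
  constructor
  · simp
  · intro h
    have hre := congrArg Complex.re hdet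
    simp at h hre
    have ha : (g 0 0).re = 1 := by nlinarith [sq_nonneg (g 0 0).im, sq_nonneg (g 0 1).re, sq_nonneg (g 0 1).im, sq_nonneg ((g 0 0).re - 1)]
    rw [ha] at hre
    have hb : (g 0 0).im = 0 := by nlinarith [sq_nonneg (g 0 0).im, sq_nonneg (g 0 1).re, sq_nonneg (g 0 1).im]
    have hc : (g 0 1).re = 0 := by nlinarith [sq_nonneg (g 0 0).im, sq_nonneg (g 0 1).re, sq_nonneg (g 0 1).im]
    have hc' : (g 0 1).im = 0 := by nlinarith [sq_nonneg (g 0 0).im, sq_nonneg (g 0 1).re, sq_nonneg (g 0 1).im]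
    have A : g 0 0 = 1 := Complex.ext ha hb
    have B : g 0 1 = 0 := Complex.ext hc hc'
    ext i j
    fin_cases i <;> fin_cases j <;> simp [A, B, h11, h10]

end Words

theorem lift_comp {d : ℕ} {G H : Type*} [Group G] [Group H] (φ : G →* H) (g : Fin d → G)
    (w : FreeGroup (Fin d)) : FreeGroup.lift (fun i => φ (g i)) w = φ (FreeGroup.lift g w) := by
  have : FreeGroup.lift (fun i => φ (g i)) = φ.comp (FreeGroup.lift g) := by
    apply FreeGroup.ext_hom; intro i; simp
  rw [this]; rfl

noncomputable def GG (d : ℕ) (θ : ℝ) (i : Fin d) : unitaryGroup (Fin 2) ℂ :=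
  ⟨LL (Complex.exp (θ * Complex.I)) ((i : ℕ), true), LL_mem _ (Complex.norm_exp_ofReal_mul_I θ) _⟩

def wl {d : ℕ} (w : FreeGroup (Fin d)) : List (ℕ × Bool) := w.toWord.map fun x => ((x.1:ℕ), x.2)

theorem lift_GG {d : ℕ} (w : FreeGroup (Fin d)) (θ : ℝ) :
    ((FreeGroup.lift (GG d θ) w : unitaryGroup (Fin 2) ℂ) : Matrix (Fin 2) (Fin 2) ℂ)
      = ((wl w).map (LL (Complex.exp (θ * Complex.I)))).prod := by
  conv_lhs => rw [← FreeGroup.mk_toWord (x := w), FreeGroup.lift_mk]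
  have : ∀ l : List (unitaryGroup (Fin 2) ℂ), ((l.prod : unitaryGroup (Fin 2) ℂ) : Matrix (Fin 2) (Fin 2) ℂ)
      = (l.map fun x : unitaryGroup (Fin 2) ℂ => (x : Matrix (Fin 2) (Fin 2) ℂ)).prod := by
    intro l
    exact map_list_prod (unitaryGroup (Fin 2) ℂ).subtype l
  rw [this, wl, List.map_map, List.map_map]
  congr 2
  funext ⟨i, b⟩
  cases b
  · simp only [Function.comp, cond_false]
    change star (LL _ _) = _
    rw [LL_star _ (Complex.norm_exp_ofReal_mul_I θ), LL_inv]
    rfl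
  · rfl

theorem wl_reduced {d : ℕ} (w : FreeGroup (Fin d)) : FreeGroup.IsReduced (wl w) := by
  have h := FreeGroup.isReduced_toWord (x := w)
  unfold FreeGroup.IsReduced at h ⊢
  rw [wl, List.isChain_map]
  refine h.imp ?_
  intro a b hab h1
  exact hab (Fin.ext h1)

theorem det_list (z : ℂ) (hz : z ≠ 0) (L : List (ℕ × Bool)) :
    ((L.map (LL z)).prod).det = 1 := by
  induction L with
  | nil => simp
  | cons x L ih => simp [ih, LL_det z hz]

theorem word_trace {d : ℕ} (w : FreeGroup (Fin d)) (hw : w ≠ 1) :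
    ∃ c : ℝ, c < 2 ∧ ∀ t : ℝ, c ≤ t → t ≤ 2 → ∃ G : Fin d → unitaryGroup (Fin 2) ℂ,
      (∀ i, (G i : Matrix (Fin 2) (Fin 2) ℂ).det = 1) ∧
      ((FreeGroup.lift G w : unitaryGroup (Fin 2) ℂ) : Matrix (Fin 2) (Fin 2) ℂ).det = 1 ∧
      ((FreeGroup.lift G w : unitaryGroup (Fin 2) ℂ) : Matrix (Fin 2) (Fin 2) ℂ).trace = t := by
  have hL : wl w ≠ [] := by
    simpa [wl] using hw
  obtain ⟨z, hz, hne⟩ := exists_word_ne (wl w) (wl_reduced w) hL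
  have hzθ : Complex.exp ((z.arg : ℝ) * Complex.I) = z := by
    have := Complex.norm_mul_exp_arg_mul_I z
    rwa [hz, Complex.ofReal_one, one_mul] at this
  set W : ℝ → Matrix (Fin 2) (Fin 2) ℂ :=
    fun θ => ((wl w).map (LL (Complex.exp (θ * Complex.I)))).prod with hW
  have hWG : ∀ θ, ((FreeGroup.lift (GG d θ) w : unitaryGroup (Fin 2) ℂ) : Matrix (Fin 2) (Fin 2) ℂ) = W θ :=
    fun θ => lift_GG w θ
  have hWd : ∀ θ, (W θ).det = 1 := fun θ => det_list _ (Complex.exp_ne_zero _) _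
  have hWu : ∀ θ, W θ ∈ unitaryGroup (Fin 2) ℂ := fun θ => by
    rw [← hWG]; exact (FreeGroup.lift (GG d θ) w).2
  have hcont : Continuous W := by
    apply continuous_list_prod
    intro x _
    unfold LL
    have h1 : Continuous fun θ : ℝ => Complex.exp (θ * Complex.I) := by fun_prop
    exact ((h1.inv₀ fun θ => Complex.exp_ne_zero _).smul continuous_const).add
      (h1.smul continuous_const)
  set f : ℝ → ℝ := fun θ => (W θ).trace.re with hf
  have hfc : Continuous f := Complex.continuous_re.comp hcont.matrix_trace
  have hf0 : f 0 = 2 := by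
    have : W 0 = 1 := by
      have h1 : ∀ x, LL 1 x = 1 := by intro x; simp [LL]
      have h2 : (wl w).map (LL 1) = (wl w).map (fun _ => 1) := List.map_congr_left fun x _ => h1 x
      simp [hW, h2]
    simp [hf, this]
  have hf1 : f z.arg < 2 := by
    by_contra! hcon
    apply hne
    have := (su2_trace _ (hWu z.arg) (hWd z.arg)).2 hcon
    simpa [hW, hzθ] using this
  refine ⟨f z.arg, hf1, fun t h1 h2 => ?_⟩
  have hivt := intermediate_value_uIcc (a := z.arg) (b := 0) (f := f) hfc.continuousOn
  obtain ⟨θ, -, hθ⟩ := hivt (show t ∈ Set.uIcc (f z.arg) (f 0) by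
    rw [hf0, Set.uIcc_of_le hf1.le]; exact ⟨h1, h2⟩)
  refine ⟨GG d θ, fun i => LL_det _ (Complex.exp_ne_zero _) _, ?_, ?_⟩
  · rw [hWG]; exact hWd θ
  · rw [hWG]
    apply Complex.ext
    · simpa using hθ
    · simpa using (su2_trace _ (hWu θ) (hWd θ)).1

theorem star_unit {ι : Type*} [Fintype ι] [DecidableEq ι] (V : unitaryGroup ι ℂ) :
    star (V : Matrix ι ι ℂ) = ((V⁻¹ : unitaryGroup ι ℂ) : Matrix ι ι ℂ) := rfl

/-- diagonal form in U(2) -/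
theorem diag2 (g : unitaryGroup (Fin 2) ℂ) (hd : (g : Matrix (Fin 2) (Fin 2) ℂ).det = 1) :
    ∃ V : unitaryGroup (Fin 2) ℂ, ∃ a : ℂ, a ≠ 0 ∧
      (g : Matrix (Fin 2) (Fin 2) ℂ) = V * diagonal ![a, a⁻¹] * star (V : Matrix (Fin 2) (Fin 2) ℂ) ∧
      (g : Matrix (Fin 2) (Fin 2) ℂ).trace = a + a⁻¹ := by
  obtain ⟨V, hV, e, he⟩ := unitary_diag (g : Matrix (Fin 2) (Fin 2) ℂ) g.2
  have h1 : V * star V = 1 := mem_unitaryGroup_iff.1 hV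
  have h2 : star V * V = 1 := mem_unitaryGroup_iff'.1 hV
  have hdet : e 0 * e 1 = 1 := by
    rw [he, det_mul, det_mul, mul_right_comm, ← det_mul, h1, det_one, one_mul, det_diagonal] at hd
    simpa [Fin.prod_univ_two] using hd
  have ha : e 0 ≠ 0 := left_ne_zero_of_mul_eq_one hdet
  have hb : e 1 = (e 0)⁻¹ := (inv_eq_of_mul_eq_one_right hdet).symm
  have hed : e = ![e 0, (e 0)⁻¹] := by
    rw [← hb]; ext i; fin_cases i <;> rfl
  refine ⟨⟨V, hV⟩, e 0, ha, ?_, ?_⟩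
  · rw [← hed]; exact he
  · rw [he, trace_mul_comm, ← Matrix.mul_assoc, h2, Matrix.one_mul, trace_diagonal, Fin.sum_univ_two, hb]

theorem sym_det (m : ℕ) (g : unitaryGroup (Fin 2) ℂ) (hd : (g : Matrix (Fin 2) (Fin 2) ℂ).det = 1) :
    (sym m g).det = 1 := by
  obtain ⟨V, a, ha, hg, -⟩ := diag2 g hd
  rw [hg, sym_mul, sym_mul, det_mul, det_mul, mul_right_comm, ← det_mul, ← sym_mul,
    mem_unitaryGroup_iff.1 V.2, sym_one, det_one, one_mul, sym_diagonal, det_diagonal,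
    Finset.prod_mul_distrib]
  have : ∏ i : Fin (m+1), a ^ (m - (i:ℕ)) = ∏ i : Fin (m+1), a ^ (i:ℕ) := by
    rw [← Equiv.prod_comp Fin.revPerm]
    apply Finset.prod_congr rfl
    intro i _
    congr 1
    simp [Fin.val_rev]
    omega
  rw [this, ← Finset.prod_mul_distrib]
  apply Finset.prod_eq_one
  intro i _
  rw [inv_pow, mul_inv_cancel₀ (pow_ne_zero _ ha)]

/-- twisted cyclic matrix -/
def cyc (m : ℕ) : Matrix (Fin (m+1)) (Fin (m+1)) ℂ :=
  of fun j k => if k = j + 1 then (if j = Fin.last m then (-1)^m else 1) else 0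

theorem cyc_diag (m : ℕ) (a : ℂ) (ha : a ^ (m+1) = -1) (hn : ‖a‖ = 1)
    (hprim : IsPrimitiveRoot (a^2) (m+1)) :
    ∃ F : unitaryGroup (Fin (m+1)) ℂ, cyc m = F *
      diagonal (fun k : Fin (m+1) => a ^ (m - (k:ℕ)) * a⁻¹ ^ (k:ℕ)) *
        star (F : Matrix (Fin (m+1)) (Fin (m+1)) ℂ) := by
  have ha0 : a ≠ 0 := by rintro rfl; simp at hn
  set η : Fin (m+1) → ℂ := fun k => a ^ (m - (k:ℕ)) * a⁻¹ ^ (k:ℕ) with hη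
  have hη1 : ∀ k, η k = a ^ m * ((a^2) ^ (k:ℕ))⁻¹ := by
    intro k
    have hk : (k:ℕ) ≤ m := Nat.lt_succ_iff.1 k.2
    simp only [hη]
    rw [← pow_mul, inv_pow]
    field_simp
    rw [← pow_add, ← pow_add]; congr 1; omega
  have hηn : ∀ k, ‖η k‖ = 1 := by intro k; simp [hη, hn]
  have hηp : ∀ k, η k ^ (m+1) = (-1)^m := by
    intro k
    rw [hη1, mul_pow, inv_pow, ← pow_mul, ← pow_mul (a^2), mul_comm (k:ℕ), pow_mul (a^2), hprim.pow_eq_one,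
      mul_comm m, pow_mul, ha]
    simp
  have hηinj : Function.Injective η := by
    intro k l h
    rw [hη1, hη1] at h
    have := inv_injective (mul_left_cancel₀ (pow_ne_zero _ ha0) h)
    exact Fin.ext (hprim.pow_inj k.2 l.2 this)
  set s : ℂ := (((Real.sqrt (m+1))⁻¹ : ℝ) : ℂ) with hs
  have hss : s * s * ((m:ℂ)+1) = 1 := by
    rw [hs, ← Complex.ofReal_mul, ← mul_inv, Real.mul_self_sqrt (by positivity)]
    push_cast
    exact inv_mul_cancel₀ (by exact_mod_cast Nat.succ_ne_zero m)
  have hsst : star s = s := by rw [hs]; exact Complex.conj_ofReal _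
  set F : Matrix (Fin (m+1)) (Fin (m+1)) ℂ := of fun j k => s * η k ^ (j:ℕ) with hF
  have hFu : F ∈ unitaryGroup (Fin (m+1)) ℂ := by
    rw [mem_unitaryGroup_iff']
    ext k l
    rw [mul_apply]
    have : ∀ j : Fin (m+1), (star F) k j * F j l = s * s * ((η k)⁻¹ * η l) ^ (j:ℕ) := by
      intro j
      have hst : star (η k) = (η k)⁻¹ := by rw [Complex.inv_eq_conj (hηn k)]; rfl
      rw [star_apply]
      simp only [hF, of_apply]
      rw [star_mul', star_pow, hst, hsst, mul_pow]; ring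
    simp only [this]
    rw [← Finset.mul_sum, Fin.sum_univ_eq_sum_range (fun j => ((η k)⁻¹ * η l) ^ j)]
    have hk0 : η k ≠ 0 := by intro h; have := hηn k; simp [h] at this
    by_cases hkl : k = l
    · subst hkl
      rw [inv_mul_cancel₀ hk0]
      simpa using hss
    · rw [one_apply_ne hkl]
      have h1 : (η k)⁻¹ * η l ≠ 1 := by
        intro h; apply hkl; apply hηinj
        rw [inv_mul_eq_one₀ hk0] at h; exact h
      have h2 := mul_neg_geom_sum ((η k)⁻¹ * η l) (m+1)
      rw [mul_pow, inv_pow, hηp, hηp, inv_mul_cancel₀ (by simp), sub_self] at h2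
      rw [(mul_eq_zero.1 h2).resolve_left (sub_ne_zero.2 h1.symm), mul_zero]
  refine ⟨⟨F, hFu⟩, ?_⟩
  have key : cyc m * F = F * diagonal η := by
    ext j k
    rw [mul_diagonal, mul_apply, Finset.sum_eq_single (j+1)]
    · simp only [cyc, hF, of_apply, if_true]
      by_cases hj : j = Fin.last m
      · subst hj
        rw [if_pos rfl, ← hηp k]; simp; ring
      · rw [if_neg hj, Fin.val_add_one_of_lt (lt_of_le_of_ne (Fin.le_last _) hj)]; ring
    · intro b _ hb; simp [cyc, hb]
    · simp
  change cyc m = F * diagonal η * star F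
  rw [← key, mul_assoc, mem_unitaryGroup_iff.1 hFu, mul_one]

theorem wordValues_conj {d n : ℕ} (w : FreeGroup (Fin d)) (V x : unitaryGroup (Fin n) ℂ)
    (hx : x ∈ wordValuesIn w (SU n)) : V * x * V⁻¹ ∈ wordValuesIn w (SU n) := by
  obtain ⟨g, hg, rfl⟩ := hx
  refine ⟨fun i => MulAut.conj V (g i), fun i => ?_, ?_⟩
  · have h := hg i
    change (_ : Matrix (Fin n) (Fin n) ℂ).det = 1 at h
    change ((V : Matrix (Fin n) (Fin n) ℂ) * g i * star (V : Matrix (Fin n) (Fin n) ℂ)).det = 1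
    rw [det_mul, det_mul, h, mul_one, ← det_mul, mem_unitaryGroup_iff.1 V.2, det_one]
  · exact lift_comp (MulAut.conj V).toMonoidHom g w

theorem wordValues_inv {d n : ℕ} (w : FreeGroup (Fin d)) (x : unitaryGroup (Fin n) ℂ)
    (hx : x ∈ wordValuesIn w⁻¹ (SU n)) : x⁻¹ ∈ wordValuesIn w (SU n) := by
  obtain ⟨g, hg, rfl⟩ := hx
  exact ⟨g, hg, by simp⟩

theorem cyc_mem {d : ℕ} (w : FreeGroup (Fin d)) (hw : w ≠ 1) :
    ∃ N : ℕ, ∀ m : ℕ, N ≤ m → ∃ c : unitaryGroup (Fin (m+1)) ℂ,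
      (c : Matrix (Fin (m+1)) (Fin (m+1)) ℂ) = cyc m ∧ c ∈ wordValuesIn w (SU (m+1)) := by
  obtain ⟨t, ht, hG⟩ := word_trace w hw
  have hlim : Filter.Tendsto (fun m : ℕ => 2 * Real.cos (Real.pi * (1 / ((m:ℝ) + 1)))) Filter.atTop (nhds 2) := by
    have h1 := (tendsto_one_div_add_atTop_nhds_zero_nat (𝕜 := ℝ)).const_mul Real.pi
    have h2 := ((Real.continuous_cos.tendsto _).comp h1).const_mul 2
    simpa using h2
  obtain ⟨N, hN⟩ := Filter.eventually_atTop.1 (hlim.eventually (lt_mem_nhds ht))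
  refine ⟨N, fun m hm => ?_⟩
  obtain ⟨G, hGd, hgd, htr⟩ := hG _ (hN m hm).le (by linarith [Real.cos_le_one (Real.pi * (1 / ((m:ℝ) + 1)))])
  set g := FreeGroup.lift G w with hg
  set z : ℂ := Complex.exp ((Real.pi * (1 / ((m:ℝ) + 1)) : ℝ) * Complex.I) with hz
  have hz0 : z ≠ 0 := Complex.exp_ne_zero _
  have hm0 : (m:ℂ) + 1 ≠ 0 := by exact_mod_cast Nat.succ_ne_zero m
  have hzn : ‖z‖ = 1 := Complex.norm_exp_ofReal_mul_I _
  have hzp : z ^ (m+1) = -1 := by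
    rw [hz, ← Complex.exp_nat_mul, ← Complex.exp_pi_mul_I]
    congr 1
    push_cast
    field_simp
  have hzprim : IsPrimitiveRoot (z^2) (m+1) := by
    have := Complex.isPrimitiveRoot_exp (m+1) (Nat.succ_ne_zero m)
    convert this using 1
    rw [hz, ← Complex.exp_nat_mul]
    congr 1
    push_cast
    field_simp
  have hzt : ((2 * Real.cos (Real.pi * (1 / ((m:ℝ) + 1))) : ℝ) : ℂ) = z + z⁻¹ := by
    rw [hz, ← Complex.exp_neg, Complex.ofReal_mul, Complex.ofReal_cos, Complex.ofReal_ofNat,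
      Complex.two_cos, neg_mul]
  obtain ⟨V, a, ha0, hV, hta⟩ := diag2 g hgd
  have haz : a = z ∨ a = z⁻¹ := by
    rw [htr, hzt] at hta
    have : (a - z) * (a - z⁻¹) = 0 := by
      field_simp at hta ⊢
      linear_combination -hta
    rcases mul_eq_zero.1 this with h | h
    · exact Or.inl (sub_eq_zero.1 h)
    · exact Or.inr (sub_eq_zero.1 h)
  have hprops : a ^ (m+1) = -1 ∧ ‖a‖ = 1 ∧ IsPrimitiveRoot (a^2) (m+1) := by
    rcases haz with h | h
    · rw [h]; exact ⟨hzp, hzn, hzprim⟩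
    · rw [h]
      refine ⟨by rw [inv_pow, hzp]; norm_num, by simp [hzn], ?_⟩
      rw [inv_pow]; exact hzprim.inv
  obtain ⟨F, hF⟩ := cyc_diag m a hprops.1 hprops.2.1 hprops.2.2
  have hρ : symHom m g ∈ wordValuesIn w (SU (m+1)) :=
    ⟨fun i => symHom m (G i), fun i => sym_det m (G i) (hGd i), lift_comp (symHom m) G w⟩
  set X := F * (symHom m V)⁻¹ with hX
  refine ⟨X * symHom m g * X⁻¹, ?_, wordValues_conj w X _ hρ⟩
  have hsg : ((symHom m V)⁻¹ * symHom m g * symHom m V : unitaryGroup (Fin (m+1)) ℂ) = 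
      (diagonal (fun k : Fin (m+1) => a ^ (m - (k:ℕ)) * a⁻¹ ^ (k:ℕ)) : Matrix (Fin (m+1)) (Fin (m+1)) ℂ) := by
    rw [← map_inv, ← map_mul, ← map_mul, ← sym_diagonal]
    change sym m (star (V : Matrix (Fin 2) (Fin 2) ℂ) * g * V) = _
    congr 1
    have hVV : star (V : Matrix (Fin 2) (Fin 2) ℂ) * V = 1 := mem_unitaryGroup_iff'.1 V.2
    rw [hV, mul_assoc, mul_assoc, hVV, mul_one, ← mul_assoc, hVV, one_mul]
  rw [hF, ← hsg, star_unit]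
  have : X * symHom m g * X⁻¹ = F * ((symHom m V)⁻¹ * symHom m g * symHom m V) * F⁻¹ := by
    rw [hX]; group
  rw [this]; rfl

theorem cyc_twist (m : ℕ) (c T : unitaryGroup (Fin (m+1)) ℂ)
    (hc : (c : Matrix (Fin (m+1)) (Fin (m+1)) ℂ) = cyc m) (t : Fin (m+1) → ℂ)
    (hT : (T : Matrix (Fin (m+1)) (Fin (m+1)) ℂ) = diagonal t)
    (hprod : ∏ i, t i = 1) :
    ∃ σ : unitaryGroup (Fin (m+1)) ℂ, T = σ * c * σ⁻¹ * c⁻¹ := by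
  have htn : ∀ i, star (t i) * t i = 1 := by
    intro i
    have := mem_unitaryGroup_iff'.1 T.2
    rw [hT, star_eq_conjTranspose, diagonal_conjTranspose, diagonal_mul_diagonal] at this
    have := congrFun (congrFun this i) i
    simpa using this
  set τ : ℕ → ℂ := fun i => if h : i < m+1 then t ⟨i, h⟩ else 1 with hτ
  have hτn : ∀ i, star (τ i) * τ i = 1 := by
    intro i; simp only [hτ]; split_ifs with h
    · exact htn _
    · simp
  have hτv : ∀ i : Fin (m+1), τ i = t i := by
    intro i; simp only [hτ]; rw [dif_pos i.2]
  set s : ℕ → ℂ := fun j => ∏ i ∈ Finset.range j, star (τ i) with hs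
  have hsn : ∀ j, star (s j) * s j = 1 := by
    intro j
    simp only [hs, star_prod, star_star, ← Finset.prod_mul_distrib]
    apply Finset.prod_eq_one
    intro i _; rw [mul_comm]; exact hτn i
  have hsucc : ∀ j, τ j * s (j+1) = s j := by
    intro j
    simp only [hs, Finset.prod_range_succ]
    linear_combination (∏ i ∈ Finset.range j, star (τ i)) * hτn j
  have hlast : s (m+1) = 1 := by
    simp only [hs]
    rw [← star_prod, ← Fin.prod_univ_eq_prod_range τ (m+1)]
    simp [hτv, hprod]
  have hσ : diagonal (fun j : Fin (m+1) => s j) ∈ unitaryGroup (Fin (m+1)) ℂ := by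
    rw [mem_unitaryGroup_iff', star_eq_conjTranspose, diagonal_conjTranspose, diagonal_mul_diagonal]
    rw [← diagonal_one]; congr 1; funext j; exact hsn j
  refine ⟨⟨_, hσ⟩, ?_⟩
  rw [eq_mul_inv_iff_mul_eq, eq_mul_inv_iff_mul_eq]
  apply Subtype.ext
  change (T : Matrix (Fin (m+1)) (Fin (m+1)) ℂ) * c * diagonal (fun j : Fin (m+1) => s j)
    = diagonal (fun j : Fin (m+1) => s j) * c
  rw [hT, hc]
  ext j k
  rw [mul_diagonal, diagonal_mul, diagonal_mul]
  by_cases hk : k = j + 1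
  · have : t j * s k = s j := by
      rw [← hsucc j, hτv, hk]
      by_cases hj : j = Fin.last m
      · subst hj; simp [hlast]; simp [hs]
      · rw [Fin.val_add_one_of_lt (lt_of_le_of_ne (Fin.le_last _) hj)]
    linear_combination (cyc m j k) * this
  · simp [cyc, hk]

/-- For all nontrivial words `w₁, w₂`, there is `N` such that for all `n ≥ N`,
`SU(n) = w₁(SU(n)) · w₂(SU(n))`. -/
theorem su_waring_two {d₁ d₂ : ℕ} (w₁ : FreeGroup (Fin d₁)) (w₂ : FreeGroup (Fin d₂))
    (hw₁ : w₁ ≠ 1) (hw₂ : w₂ ≠ 1) :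
    ∃ N : ℕ, ∀ n : ℕ, N ≤ n → ∀ x ∈ SU n,
      ∃ g₁ ∈ wordValuesIn w₁ (SU n), ∃ g₂ ∈ wordValuesIn w₂ (SU n), x = g₁ * g₂ := by
  obtain ⟨N₁, h₁⟩ := cyc_mem w₁ hw₁
  obtain ⟨N₂, h₂⟩ := cyc_mem w₂⁻¹ (inv_ne_one.2 hw₂)
  refine ⟨max N₁ N₂ + 1, fun n hn x hx => ?_⟩
  obtain ⟨m, rfl⟩ : ∃ m, n = m + 1 := ⟨n - 1, by omega⟩
  obtain ⟨c, hc, hcw₁⟩ := h₁ m (by omega)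
  obtain ⟨c', hc', hcw₂⟩ := h₂ m (by omega)
  obtain rfl : c = c' := Subtype.ext (hc.trans hc'.symm)
  obtain ⟨V, hV, t, hVt⟩ := unitary_diag (x : Matrix (Fin (m+1)) (Fin (m+1)) ℂ) x.2
  set V' : unitaryGroup (Fin (m+1)) ℂ := ⟨V, hV⟩ with hV'
  have h1 : V * star V = 1 := mem_unitaryGroup_iff.1 hV
  have h2 : star V * V = 1 := mem_unitaryGroup_iff'.1 hV
  have hT : ((V'⁻¹ * x * V' : unitaryGroup (Fin (m+1)) ℂ) : Matrix (Fin (m+1)) (Fin (m+1)) ℂ) = diagonal t := by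
    change star V * (x : Matrix (Fin (m+1)) (Fin (m+1)) ℂ) * V = _
    rw [hVt, mul_assoc, mul_assoc, h2, mul_one, ← mul_assoc, h2, one_mul]
  have hprod : ∏ i, t i = 1 := by
    have hd : (x : Matrix (Fin (m+1)) (Fin (m+1)) ℂ).det = 1 := hx
    rw [hVt, det_mul, det_mul, mul_right_comm, ← det_mul, h1, det_one, one_mul, det_diagonal] at hd
    exact hd
  obtain ⟨σ, hσ⟩ := cyc_twist m c _ hc t hT hprod
  refine ⟨V' * (σ * c * σ⁻¹) * V'⁻¹, wordValues_conj _ _ _ (wordValues_conj _ _ _ hcw₁),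
    V' * c⁻¹ * V'⁻¹, wordValues_conj _ _ _ (wordValues_inv _ _ hcw₂), ?_⟩
  calc x = V' * (V'⁻¹ * x * V') * V'⁻¹ := by group
    _ = _ := by rw [hσ]; group
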